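/- Let p = <P,F,O> and p' = <P',F',O'> be consistent ODRL Lite policies. If there exists an obligation rule τ' ∈ O' such that no obligation rule τ ∈ O satisfies τ ⊑ τ', then p is not contained in p'; in particular, the state of the world obtained by choosing, for each τ ∈ O, one event that matches τ but does not match τ', is valid for p but violates p'. -/

import Mathlib

/-- An event rule is identified with its matching predicate on events. -/
abbrev EventRule (Event : Type*) := Event → Prop

/-- Rule containment: every event matching `τ` matches `τ'`. -/
def RuleContained {Event : Type*} (τ τ' : EventRule Event) : Prop :=
  ∀ e, τ e → τ' e

/-- Rule-set containment: every event matching some rule of `S` matches some rule of `S'`. -/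
def RuleSetContained {Event : Type*} (S S' : Set (EventRule Event)) : Prop :=
  ∀ e, (∃ τ ∈ S, τ e) → (∃ τ' ∈ S', τ' e)

/-- Rule sets overlap: some event matches a rule of `S` and a rule of `S'`. -/
def RuleSetOverlap {Event : Type*} (S S' : Set (EventRule Event)) : Prop :=
  ∃ e, (∃ τ ∈ S, τ e) ∧ (∃ τ' ∈ S', τ' e)

/-- An ODRL Lite policy: permissions, prohibitions and obligations. -/
structure ODRLLitePolicy (Event : Type*) where
  P : Set (EventRule Event)
  F : Set (EventRule Event)
  O : Set (EventRule Event)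

/-- A state of the world `ω` violates a policy `p`. -/
def Violates {Event : Type*} (ω : Set Event) (p : ODRLLitePolicy Event) : Prop :=
  (∃ e ∈ ω, ∀ τ ∈ p.P, ¬ τ e) ∨
  (∃ e ∈ ω, ∃ τ ∈ p.F, τ e) ∨
  (∃ τ ∈ p.O, ∀ e ∈ ω, ¬ τ e)

/-- `ω` is valid for `p` if it does not violate it. -/
def Valid {Event : Type*} (ω : Set Event) (p : ODRLLitePolicy Event) : Prop :=
  ¬ Violates ω p

/-- Policy containment: every state of the world valid for `p` is valid for `p'`. -/
def PolicyContained {Event : Type*} (p p' : ODRLLitePolicy Event) : Prop :=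
  ∀ ω : Set Event, Valid ω p → Valid ω p'

/-- A policy is consistent if permissions and prohibitions do not overlap,
obligations and prohibitions do not overlap, and obligations are contained
in permissions. -/
def Consistent {Event : Type*} (p : ODRLLitePolicy Event) : Prop :=
  ¬ RuleSetOverlap p.P p.F ∧ ¬ RuleSetOverlap p.O p.F ∧ RuleSetContained p.O p.P

section

variable {Event : Type*} {p p' : ODRLLitePolicy Event} {ω : Set Event} {τ τ' : EventRule Event}

theorem not_ruleContained_iff : ¬ RuleContained τ τ' ↔ ∃ e, τ e ∧ ¬ τ' e := by
  simp only [RuleContained, not_forall, exists_prop]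

theorem valid_iff :
    Valid ω p ↔ (∀ e ∈ ω, ∃ τ ∈ p.P, τ e) ∧ (∀ e ∈ ω, ∀ τ ∈ p.F, ¬ τ e) ∧
      ∀ τ ∈ p.O, ∃ e ∈ ω, τ e := by
  simp only [Valid, Violates, not_or, not_exists, not_and, not_forall, not_not, exists_prop]

theorem violates_of_obligation_unmatched (hτ : τ ∈ p.O) (hω : ∀ e ∈ ω, ¬ τ e) : Violates ω p :=
  Or.inr (Or.inr ⟨τ, hτ, hω⟩)

theorem valid_of_forall_mem_matches_obligation
    (hOF : ¬ RuleSetOverlap p.O p.F) (hOP : RuleSetContained p.O p.P)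
    (hobliged : ∀ e ∈ ω, ∃ τ ∈ p.O, τ e) (hfulfilled : ∀ τ ∈ p.O, ∃ e ∈ ω, τ e) :
    Valid ω p :=
  valid_iff.mpr
    ⟨fun e he => hOP e (hobliged e he),
      fun e he τ hτ hτe => hOF ⟨e, hobliged e he, τ, hτ, hτe⟩,
      hfulfilled⟩

theorem valid_range_of_forall_obligation_matches
    (hOF : ¬ RuleSetOverlap p.O p.F) (hOP : RuleSetContained p.O p.P)
    {g : p.O → Event} (hg : ∀ τ : p.O, τ.1 (g τ)) : Valid (Set.range g) p :=
  valid_of_forall_mem_matches_obligation hOF hOP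
    (Set.forall_mem_range.mpr fun τ => ⟨τ, τ.2, hg τ⟩)
    fun τ hτ => ⟨g ⟨τ, hτ⟩, Set.mem_range_self _, hg ⟨τ, hτ⟩⟩

-- Choosing on the subtype `p.O` lets the argument cover an empty type of events,
-- where no function `EventRule Event → Event` exists.
theorem stmt2_general (hOF : ¬ RuleSetOverlap p.O p.F) (hOP : RuleSetContained p.O p.P)
    (hτ' : τ' ∈ p'.O) (h : ∀ τ ∈ p.O, ¬ RuleContained τ τ') :
    ¬ PolicyContained p p' ∧
      ∀ g : p.O → Event, (∀ τ : p.O, τ.1 (g τ) ∧ ¬ τ' (g τ)) →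
        Valid (Set.range g) p ∧ Violates (Set.range g) p' := by
  have separates : ∀ g : p.O → Event, (∀ τ : p.O, τ.1 (g τ) ∧ ¬ τ' (g τ)) →
      Valid (Set.range g) p ∧ Violates (Set.range g) p' := fun g hg =>
    ⟨valid_range_of_forall_obligation_matches hOF hOP fun τ => (hg τ).1,
      violates_of_obligation_unmatched hτ' (Set.forall_mem_range.mpr fun τ => (hg τ).2)⟩
  refine ⟨fun hcontained => ?_, separates⟩
  choose g hg using fun τ : p.O => not_ruleContained_iff.mp (h τ τ.2)
  obtain ⟨hvalid, hviolates⟩ := separates g hg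
  exact hcontained _ hvalid hviolates

end

/-- For consistent policies, if some obligation `τ'` of `p'`
contains no obligation of `p`, then `p` is not contained in `p'`; in particular,
any state of the world obtained by choosing, for each `τ ∈ O`, one event matching
`τ` but not `τ'`, is valid for `p` but violates `p'`. -/
theorem stmt2 {Event : Type*} (p p' : ODRLLitePolicy Event)
    (hp : Consistent p) (hp' : Consistent p')
    (τ' : EventRule Event) (hτ' : τ' ∈ p'.O)
    (h : ∀ τ ∈ p.O, ¬ RuleContained τ τ') :
    ¬ PolicyContained p p' ∧
      ∀ f : EventRule Event → Event,
        (∀ τ ∈ p.O, τ (f τ) ∧ ¬ τ' (f τ)) →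
          Valid (f '' p.O) p ∧ Violates (f '' p.O) p' := by
  obtain ⟨hnot, hseparates⟩ := stmt2_general hp.2.1 hp.2.2 hτ' h
  exact ⟨hnot, fun f hf => Set.range_domRestrict f p.O ▸ hseparates _ fun τ => hf τ τ.2⟩
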